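/- There is a universal constant c > 0 with the following property. For every positive integer n there exists an origin-symmetric convex body L ⊆ ℝⁿ with nonempty interior such that for every p ≥ 1, d_ovr(L, L_pⁿ) ≥ c·√n/√p. -/

import Mathlib

open MeasureTheory Metric Set

/-- `D ⊆ ℝⁿ` is a linear image of the unit ball of an `n`-dimensional subspace of
the Banach space `L_p` (of the Lebesgue measure on `[0,1]`). -/
def IsLpBallImage (n : ℕ) (p : ℝ) (D : Set (EuclideanSpace ℝ (Fin n))) : Prop :=
  ∃ V : Submodule ℝ (Lp ℝ (ENNReal.ofReal p) (volume.restrict (Set.Icc (0:ℝ) 1))),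
    Module.finrank ℝ V = n ∧
    ∃ T : V ≃ₗ[ℝ] EuclideanSpace ℝ (Fin n),
      D = T '' {v : V |
        ‖(v : Lp ℝ (ENNReal.ofReal p) (volume.restrict (Set.Icc (0:ℝ) 1)))‖ ≤ 1}

/-!
Take `K * n` independent random sign vectors in `ℝⁿ`, with `K` a large constant. With positive
probability the mean of `|⟪xᵢ, ξ⟫|` over `i` is at least `‖ξ‖ / 100` for every `ξ`; `L` is the
symmetric convex hull of such `xᵢ`. By Maurey's empirical method `L`, having `O(n)` vertices of norm
`√n`, is covered by `2 ^ O(n)` Euclidean balls of radius `1`, so `|L| ^ (1 / n) = O(1 / √n)`.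

If a subspace of `L_p`, with norm `‖f v‖ = ‖⟪w, v⟫‖_p`, has unit ball `D ⊇ L`, then for a Gaussian
vector `g` the mean of `‖f g‖ ^ p` is the integral over `t` of the moments `𝔼 |⟪w t, g⟫| ^ p`,
which are at most `(C * √p * ‖w t‖) ^ p`. By Jensen's inequality `‖w t‖ ^ p` is at most `100 ^ p`
times the mean of `|⟪w t, xᵢ⟫| ^ p` over `i`, and these integrate to `‖f xᵢ‖ ^ p ≤ 1`. So `D`
dilated by `O(√p)` has Gaussian measure, hence volume, at least `1 / 2`.
-/

open Module (finrank)
open scoped BigOperators ENNReal NNReal RealInnerProductSpace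

section Net

variable {E : Type*} [NormedAddCommGroup E] [NormedSpace ℝ E] [FiniteDimensional ℝ E]

lemma card_le_of_isSeparated {s : Finset E} {x : E} {r : ℝ} {δ : ℝ≥0} (hr : 0 ≤ r) (hδ : 0 < δ)
    (hsub : (s : Set E) ⊆ closedBall x r) (hsep : IsSeparated δ (s : Set E)) :
    (s.card : ℝ) ≤ (1 + 2 * r / δ) ^ finrank ℝ E := by
  borelize E
  let μ : Measure E := Measure.addHaar
  have hδ' : (0 : ℝ) < δ := mod_cast hδ
  have hdisj : (s : Set E).PairwiseDisjoint fun c ↦ ball c (δ / 2 : ℝ) := by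
    intro c hc d hd hcd
    refine ball_disjoint_ball ?_
    have hlt : (δ : ℝ≥0∞) < edist c d := hsep hc hd hcd
    rw [edist_nndist, ENNReal.coe_lt_coe, ← NNReal.coe_lt_coe, coe_nndist] at hlt
    linarith
  have hunion : ⋃ c ∈ s, ball c (δ / 2 : ℝ) ⊆ ball x (r + δ / 2) :=
    iUnion₂_subset fun c hc ↦ ball_subset_ball' <| by
      linarith [mem_closedBall.1 (hsub hc)]
  have hvol : (s.card : ℝ≥0∞) * ENNReal.ofReal ((δ / 2 : ℝ) ^ finrank ℝ E) * μ (ball 0 1) ≤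
      ENNReal.ofReal ((r + δ / 2) ^ finrank ℝ E) * μ (ball 0 1) := by
    calc
      _ = ∑ c ∈ s, μ (ball c (δ / 2 : ℝ)) := by
        simp [Measure.addHaar_ball_of_pos μ _ (half_pos hδ'), mul_assoc]
      _ = μ (⋃ c ∈ s, ball c (δ / 2 : ℝ)) :=
        (measure_biUnion_finset hdisj fun _ _ ↦ measurableSet_ball).symm
      _ ≤ μ (ball x (r + δ / 2)) := measure_mono hunion
      _ = _ := Measure.addHaar_ball_of_pos μ x (by positivity)
  rw [ENNReal.mul_le_mul_iff_left (measure_ball_pos μ 0 one_pos).ne' measure_ball_lt_top.ne,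
    ← ENNReal.ofReal_natCast, ← ENNReal.ofReal_mul (by positivity),
    ENNReal.ofReal_le_ofReal_iff (by positivity)] at hvol
  rwa [show 1 + 2 * r / δ = (r + δ / 2) / (δ / 2) by field_simp; ring, div_pow,
    le_div_iff₀ (by positivity)]

lemma exists_finset_isCover_card_le {A : Set E} {x : E} {r : ℝ} {δ : ℝ≥0} (hr : 0 ≤ r)
    (hδ : 0 < δ) (hA : A ⊆ closedBall x r) :
    ∃ s : Finset E, (s : Set E) ⊆ A ∧ IsCover δ A s ∧
      (s.card : ℝ) ≤ (1 + 2 * r / δ) ^ finrank ℝ E := by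
  have : ProperSpace E := FiniteDimensional.proper ℝ E
  have hpack : packingNumber δ A ≠ ⊤ := by
    obtain ⟨N, -, hfin, hN⟩ := exists_finite_isCover_of_totallyBounded (half_pos hδ).ne'
      ((isCompact_closedBall x r).totallyBounded.subset hA)
    rw [← mul_div_cancel₀ δ two_ne_zero]
    exact ((packingNumber_two_mul_le_externalCoveringNumber _ A).trans
      hN.externalCoveringNumber_le_encard).trans_lt hfin.encard_lt_top |>.ne
  have hfin : (maximalSeparatedSet δ A).Finite := by
    rw [← encard_ne_top_iff]
    rwa [encard_maximalSeparatedSet hpack]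
  refine ⟨hfin.toFinset, ?_, ?_, card_le_of_isSeparated (x := x) hr hδ ?_ ?_⟩
  · simpa using maximalSeparatedSet_subset
  · simpa using isCover_maximalSeparatedSet hpack
  · simpa using maximalSeparatedSet_subset.trans hA
  · simpa using isSeparated_maximalSeparatedSet

end Net

section CoverSphere

variable {E F : Type*} [NormedAddCommGroup E] [NormedSpace ℝ E] [NormedAddCommGroup F]
  [NormedSpace ℝ F] {T : E →L[ℝ] F} {s : Set E} {δ : ℝ≥0}

lemma exists_norm_map_sub_le_of_isCover_sphere (hs : IsCover δ (sphere 0 1) s) {x : E}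
    (hx : ‖x‖ = 1) : ∃ c ∈ s, ‖T x - T c‖ ≤ δ * ‖T‖ := by
  obtain ⟨c, hc, hxc⟩ := hs (mem_sphere_zero_iff_norm.2 hx)
  refine ⟨c, hc, ?_⟩
  have hdist : ‖x - c‖ ≤ δ := by
    rw [← dist_eq_norm]
    exact (edist_le_coe.1 hxc : nndist x c ≤ δ)
  calc
    ‖T x - T c‖ = ‖T (x - c)‖ := by rw [map_sub]
    _ ≤ ‖T‖ * ‖x - c‖ := T.le_opNorm _
    _ ≤ ‖T‖ * δ := by gcongr
    _ = δ * ‖T‖ := mul_comm _ _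

lemma opNorm_le_of_isCover_sphere {b : ℝ} (hb : 0 ≤ b) (hδ : δ < 1)
    (hs : IsCover δ (sphere 0 1) s) (hT : ∀ c ∈ s, ‖T c‖ ≤ b) : ‖T‖ ≤ b / (1 - δ) := by
  rw [le_div_iff₀ (sub_pos.2 (mod_cast hδ))]
  suffices ‖T‖ ≤ b + δ * ‖T‖ by linarith
  refine T.opNorm_le_of_unit_norm (by positivity) fun x hx ↦ ?_
  obtain ⟨c, hc, hxc⟩ := exists_norm_map_sub_le_of_isCover_sphere (T := T) hs hx
  linarith [norm_sub_norm_le (T x) (T c), hT c hc]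

lemma mul_norm_le_norm_map_of_isCover_sphere {a : ℝ} (hs : IsCover δ (sphere 0 1) s)
    (hT : ∀ c ∈ s, a ≤ ‖T c‖) (x : E) : (a - δ * ‖T‖) * ‖x‖ ≤ ‖T x‖ := by
  obtain rfl | hx := eq_or_ne x 0
  · simp
  obtain ⟨c, hc, hxc⟩ := exists_norm_map_sub_le_of_isCover_sphere (T := T) hs
    (norm_smul_inv_norm (𝕜 := ℝ) hx)
  have hunit : a - δ * ‖T‖ ≤ ‖T ((‖x‖⁻¹ : ℝ) • x)‖ := by
    have := norm_sub_norm_le (T c) (T ((‖x‖⁻¹ : ℝ) • x))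
    rw [norm_sub_rev] at this
    simp only [RCLike.ofReal_real_eq_id, id_eq] at hxc
    linarith [hT c hc]
  rwa [map_smul, norm_smul, norm_inv, norm_norm, le_inv_mul_iff₀ (norm_pos_iff.2 hx),
    mul_comm] at hunit

end CoverSphere

section Expect

lemma expect_prod_apply {κ α K : Type*} [Fintype κ] [DecidableEq κ] [Fintype α] [Semifield K]
    [CharZero K] (f : κ → α → K) : 𝔼 X : κ → α, ∏ i, f i (X i) = ∏ i, 𝔼 a, f i a := by
  simp only [Fintype.expect_eq_sum_div_card, Finset.prod_div_distrib, Finset.prod_const,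
    Finset.card_univ, Fintype.card_fun, Nat.cast_pow, Finset.prod_univ_sum, Fintype.piFinset_univ]

lemma expect_re {α : Type*} [Fintype α] (f : α → ℂ) : 𝔼 a, (f a).re = (𝔼 a, f a).re :=
  (map_expect (Complex.reLm.restrictScalars ℚ≥0) f Finset.univ).symm

end Expect

section SignVector

variable {ι : Type*} [Fintype ι]

/-- The vertex of the cube `[-1, 1]^ι` with the given signs, as a vector of Euclidean space. -/
def signVec (ε : ι → ℤˣ) : EuclideanSpace ℝ ι := WithLp.toLp 2 fun j ↦ ((ε j : ℤ) : ℝ)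

lemma inner_signVec (ε : ι → ℤˣ) (x : EuclideanSpace ℝ ι) :
    ⟪signVec ε, x⟫ = ∑ j, ((ε j : ℤ) : ℝ) * x j := by
  simp [signVec, PiLp.inner_apply, mul_comm]

@[simp]
lemma norm_signVec (ε : ι → ℤˣ) : ‖signVec ε‖ = √(Fintype.card ι) := by
  have h (j : ι) : |((ε j : ℤ) : ℝ)| = 1 := by
    rcases Int.units_eq_one_or (ε j) with hj | hj <;> simp [hj]
  simp [EuclideanSpace.norm_eq, signVec, h]

variable [DecidableEq ι]

lemma expect_cexp_mul_inner_signVec (z : ℂ) (x : EuclideanSpace ℝ ι) :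
    𝔼 ε : ι → ℤˣ, Complex.exp (z * (⟪signVec ε, x⟫ : ℝ)) = ∏ j, Complex.cosh (z * x j) := by
  have hprod (ε : ι → ℤˣ) : Complex.exp (z * (⟪signVec ε, x⟫ : ℝ)) =
      ∏ j, Complex.exp (z * (((ε j : ℤ) : ℂ) * x j)) := by
    simp [inner_signVec, ← Complex.exp_sum, Finset.mul_sum]
  simp_rw [hprod, expect_prod_apply fun j (e : ℤˣ) ↦ Complex.exp (z * (((e : ℤ) : ℂ) * x j))]
  refine Finset.prod_congr rfl fun j _ ↦ ?_
  rw [Fintype.expect_eq_sum_div_card]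
  simp [Complex.cosh]

lemma expect_exp_inner_signVec_le (x : EuclideanSpace ℝ ι) :
    𝔼 ε : ι → ℤˣ, Real.exp ⟪signVec ε, x⟫ ≤ Real.exp (‖x‖ ^ 2 / 2) :=
  calc
    _ = ∏ j, Real.cosh (x j) := by
      have h := congrArg Complex.re (expect_cexp_mul_inner_signVec 1 x)
      simp_rw [one_mul, ← Complex.ofReal_cosh, ← Complex.ofReal_prod, ← Complex.ofReal_exp] at h
      rw [Complex.ofReal_re, ← expect_re] at h
      simpa only [Complex.ofReal_re] using h
    _ ≤ ∏ j, Real.exp (x j ^ 2 / 2) :=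
      Finset.prod_le_prod (fun j _ ↦ (Real.cosh_pos _).le) fun j _ ↦ Real.cosh_le_exp_half_sq _
    _ = _ := by
      simp [← Real.exp_sum, EuclideanSpace.norm_sq_eq, Finset.sum_div]

lemma expect_cos_inner_signVec_le {x : EuclideanSpace ℝ ι} (hx : ‖x‖ ≤ Real.pi / 2) :
    𝔼 ε : ι → ℤˣ, Real.cos ⟪signVec ε, x⟫ ≤ Real.exp (-(2 / Real.pi ^ 2 * ‖x‖ ^ 2)) := by
  have habs (j : ι) : |x j| ≤ Real.pi / 2 := (PiLp.norm_apply_le x j).trans hx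
  calc
    _ = ∏ j, Real.cos (x j) := by
      have h := congrArg Complex.re (expect_cexp_mul_inner_signVec Complex.I x)
      simp_rw [mul_comm Complex.I, Complex.cosh_mul_I, ← Complex.ofReal_cos,
        ← Complex.ofReal_prod] at h
      rw [Complex.ofReal_re, ← expect_re] at h
      simpa only [Complex.exp_ofReal_mul_I_re] using h
    _ ≤ ∏ j, Real.exp (-(2 / Real.pi ^ 2 * x j ^ 2)) :=
      Finset.prod_le_prod (fun j _ ↦ Real.cos_nonneg_of_mem_Icc (abs_le.1 (habs j))) fun j _ ↦
        (Real.cos_le_one_sub_mul_cos_sq ((habs j).trans (by linarith [Real.pi_pos]))).trans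
          (Real.one_sub_le_exp_neg _)
    _ = _ := by
      simp [← Real.exp_sum, EuclideanSpace.norm_sq_eq, Finset.mul_sum]

/- The cosine makes the expectation over sign vectors a product over coordinates. -/
lemma exp_neg_abs_le_one_sub_one_sub_cos_div (y : ℝ) :
    Real.exp (-|y|) ≤ 1 - (1 - Real.cos y) / 4 := by
  have hexp : Real.exp (-|y|) ≤ 1 / (1 + |y|) := by
    rw [Real.exp_neg, ← one_div]
    exact one_div_le_one_div_of_le (by positivity) (by linarith [Real.add_one_le_exp |y|])
  have hcos : 1 - |y| ^ 2 / 2 ≤ Real.cos y := by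
    simpa using Real.one_sub_sq_div_two_le_cos (x := y)
  refine hexp.trans ?_
  rw [div_le_iff₀ (by positivity)]
  obtain hy | hy := le_total |y| 1 <;> nlinarith [abs_nonneg y, Real.neg_one_le_cos y]

lemma expect_exp_abs_inner_signVec_sub_two_le {x : EuclideanSpace ℝ ι} (hx : ‖x‖ = 1) :
    𝔼 ε : ι → ℤˣ, Real.exp (|⟪signVec ε, x⟫| - 2) ≤ 46 / 47 := by
  have hx' := expect_exp_inner_signVec_le (-x)
  have hsum : 𝔼 ε : ι → ℤˣ, Real.exp |⟪signVec ε, x⟫| ≤ 2 * Real.exp (1 / 2) := by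
    refine (Finset.expect_le_expect fun ε _ ↦ Real.exp_abs_le _).trans ?_
    rw [Finset.expect_add_distrib]
    simp_rw [← inner_neg_right]
    have := expect_exp_inner_signVec_le x
    simp only [norm_neg, hx, one_pow] at this hx'
    linarith
  have hnum : 2 * Real.exp (1 / 2) / Real.exp 2 ≤ 46 / 47 := by
    rw [mul_div_assoc, ← Real.exp_sub]
    have : Real.exp (3 / 2) ≥ 5 / 2 := by linarith [Real.add_one_le_exp (3 / 2 : ℝ)]
    rw [show (1 / 2 - 2 : ℝ) = -(3 / 2) by norm_num, Real.exp_neg, ← div_eq_mul_inv,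
      div_le_div_iff₀ (Real.exp_pos _) (by norm_num)]
    linarith
  simp_rw [Real.exp_sub, ← Finset.expect_div]
  exact (div_le_div_of_nonneg_right hsum (Real.exp_pos 2).le).trans hnum

lemma expect_exp_sub_abs_inner_signVec_le {x : EuclideanSpace ℝ ι} (hx : ‖x‖ = 1) :
    𝔼 ε : ι → ℤˣ, Real.exp (1 / 48 - |⟪signVec ε, x⟫|) ≤ 46 / 47 := by
  have hcos : 𝔼 ε : ι → ℤˣ, Real.cos ⟪signVec ε, x⟫ ≤ 5 / 6 := by
    refine (expect_cos_inner_signVec_le (by linarith [Real.pi_gt_three])).trans ?_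
    have hpi : (1 : ℝ) / 5 ≤ 2 / Real.pi ^ 2 := by
      rw [div_le_div_iff₀ (by norm_num) (by positivity)]
      nlinarith [Real.pi_lt_d2, Real.pi_pos]
    rw [hx, one_pow, mul_one, Real.exp_neg, inv_le_comm₀ (Real.exp_pos _) (by norm_num)]
    linarith [Real.add_one_le_exp (2 / Real.pi ^ 2)]
  have hneg : 𝔼 ε : ι → ℤˣ, Real.exp (-|⟪signVec ε, x⟫|) ≤ 23 / 24 := by
    refine (Finset.expect_le_expect fun ε _ ↦
      exp_neg_abs_le_one_sub_one_sub_cos_div _).trans ?_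
    rw [Finset.expect_sub_distrib, ← Finset.expect_div, Finset.expect_sub_distrib]
    simp only [Fintype.expect_const]
    linarith
  have hexp : Real.exp (1 / 48) ≤ 48 / 47 :=
    (Real.exp_bound_div_one_sub_of_interval (by norm_num) (by norm_num)).trans (by norm_num)
  simp_rw [sub_eq_add_neg, Real.exp_add, ← Finset.mul_expect]
  calc
    _ ≤ (48 / 47 : ℝ) * (23 / 24) := by gcongr
    _ = 46 / 47 := by norm_num

end SignVector

section MeanNorming

variable {κ E : Type*} [Fintype κ] [NormedAddCommGroup E] [InnerProductSpace ℝ E]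

/-- The family `x` norms `E` on average with constant `c`: the mean of `|⟪x i, ξ⟫|` over `i` is at
least `c * ‖ξ‖`. The mean is written as a sum so that no division by `Fintype.card κ` occurs. -/
def IsMeanNorming (c : ℝ) (x : κ → E) : Prop :=
  ∀ ξ, Fintype.card κ * (c * ‖ξ‖) ≤ ∑ i, |⟪x i, ξ⟫|

lemma isMeanNorming_of_isCover_sphere {x : κ → E} {s : Set E} {δ : ℝ≥0} {a b : ℝ} (hδ : δ < 1)
    (hb : 0 ≤ b) (hs : IsCover δ (sphere 0 1) s)
    (hlower : ∀ ξ ∈ s, Fintype.card κ * a ≤ ∑ i, |⟪x i, ξ⟫|)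
    (hupper : ∀ ξ ∈ s, ∑ i, |⟪x i, ξ⟫| ≤ Fintype.card κ * b) :
    IsMeanNorming (a - δ * (b / (1 - δ))) x := by
  let T : E →L[ℝ] PiLp 1 fun _ : κ ↦ ℝ :=
    (PiLp.continuousLinearEquiv 1 ℝ fun _ : κ ↦ ℝ).symm.toContinuousLinearMap ∘L
      ContinuousLinearMap.pi fun i ↦ innerSL ℝ (x i)
  have hT (ξ : E) : ‖T ξ‖ = ∑ i, |⟪x i, ξ⟫| := by simp [T, PiLp.norm_eq_of_L1]
  simp_rw [← hT] at hlower hupper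
  intro ξ
  rw [← hT]
  calc
    _ = (Fintype.card κ * a - δ * (Fintype.card κ * b / (1 - δ))) * ‖ξ‖ := by ring
    _ ≤ (Fintype.card κ * a - δ * ‖T‖) * ‖ξ‖ := by
      gcongr
      exact opNorm_le_of_isCover_sphere (by positivity) hδ hs hupper
    _ ≤ ‖T ξ‖ := mul_norm_le_norm_map_of_isCover_sphere hs hlower ξ

end MeanNorming

section UnionBound

variable {κ Ω : Type*} [Fintype κ] [Fintype Ω]

lemma expect_exp_sum_apply [DecidableEq κ] (g : Ω → ℝ) :
    𝔼 X : κ → Ω, Real.exp (∑ i, g (X i)) = (𝔼 ω, Real.exp (g ω)) ^ Fintype.card κ := by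
  simp_rw [Real.exp_sum, expect_prod_apply fun (_ : κ) ω ↦ Real.exp (g ω), Finset.prod_const,
    Finset.card_univ]

lemma exists_forall_sum_apply_neg {α : Type*} [Nonempty Ω] (A : Finset α) (g : α → Ω → ℝ) {q : ℝ}
    (hg : ∀ a ∈ A, 𝔼 ω, Real.exp (g a ω) ≤ q) (hA : A.card * q ^ Fintype.card κ < 1) :
    ∃ X : κ → Ω, ∀ a ∈ A, ∑ i, g a (X i) < 0 := by
  classical
  have hexpect : 𝔼 X : κ → Ω, ∑ a ∈ A, Real.exp (∑ i, g a (X i)) < 1 := by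
    rw [Finset.expect_sum_comm]
    rw [← nsmul_eq_mul] at hA
    refine (Finset.sum_le_card_nsmul A _ _ fun a ha ↦ ?_).trans_lt hA
    rw [expect_exp_sum_apply]
    exact pow_le_pow_left₀ (Finset.expect_nonneg fun _ _ ↦ Real.exp_nonneg _) (hg a ha) _
  obtain ⟨X, -, hX⟩ := Finset.exists_lt_of_expect_lt Finset.univ_nonempty hexpect
  refine ⟨X, fun a ha ↦ Real.exp_lt_one_iff.1 ?_⟩
  exact (Finset.single_le_sum (f := fun a ↦ Real.exp (∑ i, g a (X i)))
    (fun _ _ ↦ Real.exp_nonneg _) ha).trans_lt hX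

end UnionBound

section RandomSigns

variable {ι κ : Type*} [Fintype ι] [Fintype κ]

lemma exists_sum_abs_inner_signVec_bounds {s : Finset (EuclideanSpace ℝ ι)}
    (hs : ∀ ξ ∈ s, ‖ξ‖ = 1) (hcard : 2 * s.card * (46 / 47 : ℝ) ^ Fintype.card κ < 1) :
    ∃ X : κ → ι → ℤˣ, ∀ ξ ∈ s,
      Fintype.card κ * (1 / 48 : ℝ) ≤ ∑ i, |⟪signVec (X i), ξ⟫| ∧
        ∑ i, |⟪signVec (X i), ξ⟫| ≤ Fintype.card κ * (2 : ℝ) := by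
  classical
  obtain ⟨X, hX⟩ := exists_forall_sum_apply_neg (κ := κ) (q := (46 / 47 : ℝ)) (s.disjSum s)
    (Sum.elim (fun ξ (ε : ι → ℤˣ) ↦ |⟪signVec ε, ξ⟫| - 2) fun ξ ε ↦ 1 / 48 - |⟪signVec ε, ξ⟫|)
    (by
      rintro (ξ | ξ) hξ
      · exact expect_exp_abs_inner_signVec_sub_two_le (hs ξ (Finset.inl_mem_disjSum.1 hξ))
      · exact expect_exp_sub_abs_inner_signVec_le (hs ξ (Finset.inr_mem_disjSum.1 hξ)))
    (by rwa [Finset.card_disjSum, ← two_mul, Nat.cast_mul, Nat.cast_two])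
  refine ⟨X, fun ξ hξ ↦ ?_⟩
  have hupper := hX (.inl ξ) (Finset.inl_mem_disjSum.2 hξ)
  have hlower := hX (.inr ξ) (Finset.inr_mem_disjSum.2 hξ)
  simp only [Sum.elim_inl, Sum.elim_inr, Finset.sum_sub_distrib, Finset.sum_const,
    Finset.card_univ, nsmul_eq_mul] at hupper hlower
  constructor <;> linarith

lemma exists_isMeanNorming_signVec
    (hκ : 2 * 401 ^ Fintype.card ι * (46 / 47 : ℝ) ^ Fintype.card κ < 1) :
    ∃ X : κ → ι → ℤˣ, IsMeanNorming (1 / 100) fun i ↦ signVec (X i) := by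
  obtain ⟨s, hsub, hcover, hcard⟩ := exists_finset_isCover_card_le (E := EuclideanSpace ℝ ι)
    (x := 0) (r := 1) (δ := 1 / 200) zero_le_one (by norm_num) sphere_subset_closedBall
  rw [finrank_euclideanSpace, show (1 + 2 * 1 / ((1 / 200 : ℝ≥0) : ℝ)) = 401 by norm_num] at hcard
  obtain ⟨X, hX⟩ := exists_sum_abs_inner_signVec_bounds (κ := κ)
    (fun ξ hξ ↦ mem_sphere_zero_iff_norm.1 (hsub hξ)) (hκ.trans_le' (by gcongr))
  refine ⟨X, fun ξ ↦ le_trans ?_ (isMeanNorming_of_isCover_sphere (δ := 1 / 200) (by norm_num)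
    zero_le_two hcover (fun ξ hξ ↦ (hX ξ hξ).1) (fun ξ hξ ↦ (hX ξ hξ).2) ξ)⟩
  gcongr
  norm_num

end RandomSigns

section Maurey

variable {ι E : Type*} [NormedAddCommGroup E] [InnerProductSpace ℝ E]

/- The point added at each step is chosen so that the cross term of the square is controlled by
its mean, so squared errors add up as the variances of independent samples do. -/
lemma exists_sym_norm_sum_sub_sq_le {y : ι → E} {R : ℝ} (hy : ∀ i, ‖y i‖ ≤ R) {x : E}
    (hx : x ∈ convexHull ℝ (range y)) (k : ℕ) :
    ∃ m : Sym ι k, ‖((m : Multiset ι).map y).sum - (k : ℝ) • x‖ ^ 2 ≤ k * R ^ 2 := by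
  induction k with
  | zero => exact ⟨.nil, by simp⟩
  | succ k ih =>
    obtain ⟨m, hm⟩ := ih
    set S := ((m : Multiset ι).map y).sum - (k : ℝ) • x with hS
    obtain ⟨_, ⟨i, rfl⟩, hi⟩ := ((innerₗ E (S - x)).concaveOn
      convex_univ).exists_le_of_mem_convexHull (subset_univ _) hx
    have hi : ⟪S - x, y i⟫ ≤ ⟪S - x, x⟫ := hi
    refine ⟨i ::ₛ m, ?_⟩
    have hstep : (((i ::ₛ m : Sym ι (k + 1)) : Multiset ι).map y).sum - ((k + 1 : ℕ) : ℝ) • x =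
        S - x + y i := by
      simp only [hS, Sym.coe_cons, Multiset.map_cons, Multiset.sum_cons, Nat.cast_succ, add_smul,
        one_smul]
      abel
    calc
      _ = ‖S - x‖ ^ 2 + 2 * ⟪S - x, y i⟫ + ‖y i‖ ^ 2 := by rw [hstep, norm_add_sq_real]
      _ ≤ ‖S - x‖ ^ 2 + 2 * ⟪S - x, x⟫ + R ^ 2 := by gcongr; exact hy i
      _ = ‖S‖ ^ 2 - ‖x‖ ^ 2 + R ^ 2 := by
        rw [norm_sub_sq_real, inner_sub_left S x x, real_inner_self_eq_norm_sq]
        ring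
      _ ≤ (k + 1 : ℕ) * R ^ 2 := by
        push_cast
        linarith [sq_nonneg ‖x‖]

lemma convexHull_range_subset_iUnion_closedBall {y : ι → E} {R : ℝ} (hR : 0 ≤ R)
    (hy : ∀ i, ‖y i‖ ≤ R) {k : ℕ} (hk : 0 < k) :
    convexHull ℝ (range y) ⊆
      ⋃ m : Sym ι k, closedBall ((k : ℝ)⁻¹ • ((m : Multiset ι).map y).sum) (R / √k) := by
  have hk' : (0 : ℝ) < k := mod_cast hk
  intro x hx
  obtain ⟨m, hm⟩ := exists_sym_norm_sum_sub_sq_le hy hx k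
  refine mem_iUnion.2 ⟨m, mem_closedBall.2 ?_⟩
  calc
    dist x ((k : ℝ)⁻¹ • ((m : Multiset ι).map y).sum) =
        ‖((m : Multiset ι).map y).sum - (k : ℝ) • x‖ / k := by
      rw [dist_comm, dist_eq_norm, ← inv_smul_smul₀ hk'.ne' x, ← smul_sub, norm_smul, norm_inv,
        Real.norm_of_nonneg hk'.le, smul_inv_smul₀ hk'.ne', inv_mul_eq_div]
    _ ≤ √(k * R ^ 2) / k := by gcongr; exact Real.le_sqrt_of_sq_le hm
    _ = R / √k := by
      rw [Real.sqrt_mul hk'.le, Real.sqrt_sq hR, div_eq_div_iff hk'.ne' (by positivity)]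
      rw [mul_right_comm, Real.mul_self_sqrt hk'.le, mul_comm]

lemma addHaar_convexHull_range_le [Fintype ι] [FiniteDimensional ℝ E] [MeasurableSpace E]
    [BorelSpace E] (μ : Measure E) [μ.IsAddHaarMeasure] {y : ι → E} {R : ℝ} (hR : 0 ≤ R)
    (hy : ∀ i, ‖y i‖ ≤ R) {k : ℕ} (hk : 0 < k) :
    μ (convexHull ℝ (range y)) ≤ 2 ^ (Fintype.card ι + k) * μ (closedBall 0 (R / √k)) := by
  classical
  calc
    _ ≤ ∑ m : Sym ι k, μ (closedBall ((k : ℝ)⁻¹ • ((m : Multiset ι).map y).sum) (R / √k)) :=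
      (measure_mono (convexHull_range_subset_iUnion_closedBall hR hy hk)).trans
        (measure_iUnion_fintype_le μ _)
    _ = Fintype.card (Sym ι k) * μ (closedBall 0 (R / √k)) := by
      simp [Measure.addHaar_closedBall_center]
    _ ≤ 2 ^ (Fintype.card ι + k) * μ (closedBall 0 (R / √k)) := by
      gcongr
      rw [Sym.card_sym_eq_choose]
      exact_mod_cast (Nat.choose_le_two_pow _ _).trans
        (Nat.pow_le_pow_right two_pos (Nat.sub_le _ _))

end Maurey

section AbsConvexHull

lemma isCompact_absConvexHull_of_finite {E : Type*} [AddCommGroup E] [Module ℝ E]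
    [TopologicalSpace E] [IsTopologicalAddGroup E] [ContinuousSMul ℝ E] {s : Set E}
    (hs : s.Finite) : IsCompact (absConvexHull ℝ s) := by
  rw [← convexHull_union_neg_eq_absConvexHull]
  exact (hs.union hs.neg).isCompact_convexHull ℝ

lemma absConvexHull_range_eq_convexHull_range {κ E : Type*} [AddCommGroup E] [Module ℝ E]
    (x : κ → E) :
    absConvexHull ℝ (range x) = convexHull ℝ (range (Sum.elim x (-x))) := by
  rw [Sum.elim_range, ← convexHull_union_neg_eq_absConvexHull]
  congr 2
  ext v
  simp [neg_eq_iff_eq_neg]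

variable {κ E : Type*} [NormedAddCommGroup E] [InnerProductSpace ℝ E] {x : κ → E}

lemma addHaar_absConvexHull_range_le [Fintype κ] [FiniteDimensional ℝ E] [MeasurableSpace E]
    [BorelSpace E] (μ : Measure E) [μ.IsAddHaarMeasure] {R : ℝ} (hR : 0 ≤ R)
    (hx : ∀ i, ‖x i‖ ≤ R) {k : ℕ} (hk : 0 < k) :
    μ (absConvexHull ℝ (range x)) ≤ 2 ^ (2 * Fintype.card κ + k) * μ (closedBall 0 (R / √k)) := by
  rw [absConvexHull_range_eq_convexHull_range, two_mul, ← Fintype.card_sum]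
  refine addHaar_convexHull_range_le μ hR ?_ hk
  simpa using hx

lemma IsMeanNorming.closedBall_subset_absConvexHull [CompleteSpace E] [Fintype κ]
    [Nonempty κ] {c : ℝ} (hx : IsMeanNorming c x) : closedBall 0 c ⊆ absConvexHull ℝ (range x) := by
  intro v hv
  by_contra hvx
  obtain ⟨φ, u, hu, huv⟩ := geometric_hahn_banach_closed_point convex_absConvexHull
    (isCompact_absConvexHull_of_finite (finite_range x)).isClosed hvx
  set ξ := (InnerProductSpace.toDual ℝ E).symm φ
  have hφ (z : E) : φ z = ⟪ξ, z⟫ := (InnerProductSpace.toDual_symm_apply).symm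
  have hi (i : κ) : |⟪x i, ξ⟫| < u := by
    have hmem : x i ∈ absConvexHull ℝ (range x) := subset_absConvexHull (mem_range_self i)
    have hneg := hu _ (balanced_absConvexHull.neg_mem_iff.2 hmem)
    have hpos := hu _ hmem
    rw [hφ, real_inner_comm] at hpos hneg
    rw [inner_neg_left] at hneg
    exact abs_lt.2 ⟨by linarith, hpos⟩
  have hsum : ∑ i, |⟪x i, ξ⟫| < Fintype.card κ * u := by
    simpa using Finset.sum_lt_sum_of_nonempty Finset.univ_nonempty fun i _ ↦ hi i
  have hcu : c * ‖ξ‖ < u := lt_of_mul_lt_mul_left ((hx ξ).trans_lt hsum) (Nat.cast_nonneg _)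
  have hle : ⟪ξ, v⟫ ≤ c * ‖ξ‖ := (real_inner_le_norm ξ v).trans <| by
    rw [mul_comm]
    gcongr
    simpa using hv
  rw [hφ] at huv
  linarith

end AbsConvexHull

section Gaussian

variable {E : Type*} [NormedAddCommGroup E] [InnerProductSpace ℝ E] [FiniteDimensional ℝ E]
  [MeasurableSpace E] [BorelSpace E]

variable (E) in
/-- The centred Gaussian measure with density `exp (-π * ‖v‖ ^ 2)`. With this normalisation the
density is at most `1`, so the measure is dominated by Lebesgue measure. -/
noncomputable def unitGaussian : Measure E :=
  volume.withDensity fun v ↦ ENNReal.ofReal (Real.exp (-Real.pi * ‖v‖ ^ 2))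

lemma lintegral_exp_inner_unitGaussian (w : E) :
    ∫⁻ v, ENNReal.ofReal (Real.exp ⟪w, v⟫) ∂unitGaussian E =
      ENNReal.ofReal (Real.exp (‖w‖ ^ 2 / (4 * Real.pi))) := by
  have hpi : 0 < (Real.pi : ℂ).re := by simpa using Real.pi_pos
  have hint := GaussianFourier.integrable_cexp_neg_mul_sq_norm_add hpi 1 w
  have heq := GaussianFourier.integral_cexp_neg_mul_sq_norm_add hpi 1 w
  have hexp (v : E) : Complex.exp (-(Real.pi : ℂ) * (‖v‖ : ℂ) ^ 2 + 1 * (⟪w, v⟫ : ℝ)) =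
      (Real.exp (-Real.pi * ‖v‖ ^ 2) * Real.exp ⟪w, v⟫ : ℝ) := by
    rw [← Real.exp_add]
    push_cast
    rw [one_mul]
  simp_rw [hexp] at hint heq
  rw [integral_complex_ofReal, div_self (mod_cast Real.pi_ne_zero), Complex.one_cpow,
    one_mul, one_pow, one_mul] at heq
  rw [unitGaussian, lintegral_withDensity_eq_lintegral_mul₀ (by fun_prop) (by fun_prop)]
  simp_rw [Pi.mul_apply, ← ENNReal.ofReal_mul (Real.exp_nonneg _)]
  have hint' : Integrable fun v : E ↦ Real.exp (-Real.pi * ‖v‖ ^ 2) * Real.exp ⟪w, v⟫ := hint.re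
  rw [← ofReal_integral_eq_lintegral_ofReal hint' (ae_of_all _ fun v ↦ by positivity)]
  congr 1
  exact_mod_cast heq

instance : IsProbabilityMeasure (unitGaussian E) :=
  ⟨by simpa using lintegral_exp_inner_unitGaussian (0 : E)⟩

lemma unitGaussian_le_volume : unitGaussian E ≤ volume := by
  refine Measure.le_iff.2 fun s hs ↦ ?_
  rw [unitGaussian, withDensity_apply _ hs, ← setLIntegral_one]
  refine lintegral_mono fun v ↦ ?_
  simp only [ENNReal.ofReal_le_one, Real.exp_le_one_iff]
  nlinarith [Real.pi_pos, sq_nonneg ‖v‖]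

lemma volume_closedBall_le_exp (r : ℝ) :
    volume (closedBall (0 : E) r) ≤ ENNReal.ofReal (Real.exp (Real.pi * r ^ 2)) := by
  have hle : ENNReal.ofReal (Real.exp (-(Real.pi * r ^ 2))) * volume (closedBall (0 : E) r) ≤
      1 := by
    refine le_trans ?_ (prob_le_one (μ := unitGaussian E) (s := closedBall 0 r))
    rw [unitGaussian, withDensity_apply _ measurableSet_closedBall, ← setLIntegral_const]
    refine setLIntegral_mono' measurableSet_closedBall fun v hv ↦ ?_
    have hv : ‖v‖ ≤ r := by simpa using hv
    rw [neg_mul]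
    gcongr
  rwa [mul_comm, Real.exp_neg, ENNReal.ofReal_inv_of_pos (Real.exp_pos _), ← div_eq_mul_inv,
    ENNReal.div_le_iff (by simp [Real.exp_pos]) ENNReal.ofReal_ne_top, one_mul] at hle

lemma volume_closedBall_le_pow {r : ℝ} (hr : 0 ≤ r) :
    volume (closedBall (0 : E) r) ≤
      ENNReal.ofReal ((r * Real.exp Real.pi / √(finrank ℝ E)) ^ finrank ℝ E) := by
  set d := finrank ℝ E with hd
  have hpos : 0 < √(d : ℝ) ^ d := by
    obtain h | h := d.eq_zero_or_pos
    · simp [h]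
    · positivity
  have hunit : volume (closedBall (0 : E) 1) ≤ ENNReal.ofReal (Real.exp Real.pi ^ d / √d ^ d) := by
    have h := volume_closedBall_le_exp (E := E) √d
    rwa [Measure.addHaar_closedBall' _ _ (Real.sqrt_nonneg _), ← hd,
      Real.sq_sqrt (Nat.cast_nonneg _), mul_comm, mul_comm Real.pi, Real.exp_nat_mul,
      ← ENNReal.le_div_iff_mul_le (.inl (ENNReal.ofReal_pos.2 hpos).ne')
        (.inl ENNReal.ofReal_ne_top), ← ENNReal.ofReal_div_of_pos hpos] at h
  calc
    _ = ENNReal.ofReal (r ^ d) * volume (closedBall (0 : E) 1) :=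
      Measure.addHaar_closedBall' _ _ hr
    _ ≤ ENNReal.ofReal (r ^ d) * ENNReal.ofReal (Real.exp Real.pi ^ d / √d ^ d) := by gcongr
    _ = _ := by rw [← ENNReal.ofReal_mul (by positivity), mul_div_assoc, mul_pow, div_pow]

lemma two_mul_exp_div_four_pi_le_four_rpow {p : ℝ} (hp : 1 ≤ p) :
    2 * Real.exp (p / (4 * Real.pi)) ≤ 4 ^ p := by
  have hexp : Real.exp (p / (4 * Real.pi)) ≤ 2 ^ p := by
    rw [Real.rpow_def_of_pos two_pos, Real.exp_le_exp, div_le_iff₀ (by positivity)]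
    have : 1 ≤ Real.log 2 * (4 * Real.pi) := by nlinarith [Real.log_two_gt_d9, Real.pi_gt_three]
    nlinarith
  calc
    _ ≤ (2 : ℝ) ^ p * 2 ^ p := by
      gcongr
      exact Real.self_le_rpow_of_one_le one_le_two hp
    _ = 4 ^ p := by rw [← Real.mul_rpow two_pos.le two_pos.le]; norm_num

lemma lintegral_enorm_inner_rpow_unitGaussian_le {p : ℝ} (hp : 1 ≤ p) (w : E) :
    ∫⁻ v, ‖⟪w, v⟫‖ₑ ^ p ∂unitGaussian E ≤ ENNReal.ofReal ((4 * √p * ‖w‖) ^ p) := by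
  have hp0 : 0 < p := zero_lt_one.trans_le hp
  obtain rfl | hw := eq_or_ne w 0
  · simp [hp0]
  have hw' : 0 < ‖w‖ := norm_pos_iff.2 hw
  set t : ℝ := √p / ‖w‖ with ht
  have htpos : 0 < t := by positivity
  have hnorm : ‖t • w‖ ^ 2 = p := by
    rw [norm_smul, Real.norm_of_nonneg htpos.le, ht, div_mul_cancel₀ _ hw'.ne',
      Real.sq_sqrt hp0.le]
  have hpt : p / t = √p * ‖w‖ := by
    rw [ht, div_div_eq_mul_div, mul_div_right_comm, Real.div_sqrt]
  have hbound (v : E) : ‖⟪w, v⟫‖ₑ ^ p ≤ ENNReal.ofReal ((√p * ‖w‖) ^ p) *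
      (ENNReal.ofReal (Real.exp ⟪t • w, v⟫) + ENNReal.ofReal (Real.exp ⟪-(t • w), v⟫)) := by
    rw [← ENNReal.ofReal_add (by positivity) (by positivity), ← ENNReal.ofReal_mul (by positivity),
      Real.enorm_eq_ofReal_abs, ENNReal.ofReal_rpow_of_nonneg (abs_nonneg _) hp0.le]
    refine ENNReal.ofReal_le_ofReal <|
      (ProbabilityTheory.rpow_abs_le_mul_max_exp_of_pos ⟪w, v⟫ hp0.le htpos).trans ?_
    rw [hpt, inner_neg_left, real_inner_smul_left, neg_mul]
    gcongr
    exact max_le_add_of_nonneg (Real.exp_nonneg _) (Real.exp_nonneg _)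
  calc
    _ ≤ _ := lintegral_mono hbound
    _ = ENNReal.ofReal ((√p * ‖w‖) ^ p * (2 * Real.exp (p / (4 * Real.pi)))) := by
      rw [lintegral_const_mul _ (by fun_prop), lintegral_add_left (by fun_prop),
        lintegral_exp_inner_unitGaussian, lintegral_exp_inner_unitGaussian, norm_neg, hnorm,
        ← two_mul, ENNReal.ofReal_mul (by positivity), ENNReal.ofReal_mul two_pos.le,
        ENNReal.ofReal_ofNat]
    _ ≤ ENNReal.ofReal ((√p * ‖w‖) ^ p * 4 ^ p) := by
      gcongr
      exact two_mul_exp_div_four_pi_le_four_rpow hp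
    _ = _ := by
      rw [← Real.mul_rpow (by positivity) (by norm_num), mul_comm, mul_assoc]

end Gaussian

section LpSubspace

variable {κ α E : Type*} [Fintype κ] [MeasurableSpace α] {μ : Measure α} [NormedAddCommGroup E]
  [InnerProductSpace ℝ E]

lemma IsMeanNorming.card_mul_rpow_le {c p : ℝ} {x : κ → E} (hx : IsMeanNorming c x) (hc : 0 ≤ c)
    (hp : 1 ≤ p) (ξ : E) : Fintype.card κ * (c * ‖ξ‖) ^ p ≤ ∑ i, |⟪x i, ξ⟫| ^ p := by
  obtain hN | hN := (Fintype.card κ).eq_zero_or_pos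
  · rw [hN, Nat.cast_zero, zero_mul]
    positivity
  have hN' : (0 : ℝ) < Fintype.card κ := mod_cast hN
  refine le_of_mul_le_mul_left ?_ (Real.rpow_pos_of_pos hN' (p - 1))
  calc
    _ = (Fintype.card κ * (c * ‖ξ‖)) ^ p := by
      rw [Real.mul_rpow hN'.le (by positivity), ← mul_assoc, ← Real.rpow_add_one hN'.ne',
        sub_add_cancel]
    _ ≤ (∑ i, |⟪x i, ξ⟫|) ^ p := Real.rpow_le_rpow (by positivity) (hx ξ) (by linarith)
    _ ≤ _ := by
      simpa using Real.rpow_sum_le_const_mul_sum_rpow Finset.univ (fun i ↦ ⟪x i, ξ⟫) hp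

lemma enorm_Lp_rpow_toReal {F : Type*} [NormedAddCommGroup F] {p : ℝ≥0∞} (hp0 : p ≠ 0)
    (hp : p ≠ ⊤) (g : Lp F p μ) : ‖g‖ₑ ^ p.toReal = ∫⁻ t, ‖g t‖ₑ ^ p.toReal ∂μ := by
  rw [Lp.enorm_def, eLpNorm_eq_lintegral_rpow_enorm_toReal hp0 hp, ← ENNReal.rpow_mul,
    one_div_mul_cancel (ENNReal.toReal_ne_zero.2 ⟨hp0, hp⟩), ENNReal.rpow_one]

variable [FiniteDimensional ℝ E] [MeasurableSpace E] [BorelSpace E] {p : ℝ≥0∞}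

lemma exists_measurable_inner_ae_eq (f : E →ₗ[ℝ] Lp ℝ p μ) :
    ∃ w : α → E, Measurable w ∧ ∀ v, (fun t ↦ ⟪w t, v⟫) =ᵐ[μ] f v := by
  let b := stdOrthonormalBasis ℝ E
  refine ⟨fun t ↦ ∑ j, f (b j) t • b j, ?_, fun v ↦ ?_⟩
  · exact Finset.measurable_fun_sum _ fun j _ ↦
      (Lp.stronglyMeasurable (f (b j))).measurable.smul_const (b j)
  · have hv : f v = ∑ j, ⟪b j, v⟫ • f (b j) := by
      conv_lhs => rw [← b.sum_repr' v]
      simp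
    rw [hv]
    filter_upwards [Lp.coeFn_finsetSum Finset.univ fun j ↦ ⟪b j, v⟫ • f (b j),
      ae_all_iff.2 fun j ↦ Lp.coeFn_smul ⟪b j, v⟫ (f (b j))] with t hsum hsmul
    rw [hsum, Finset.sum_apply, sum_inner]
    refine Finset.sum_congr rfl fun j _ ↦ ?_
    rw [hsmul j, Pi.smul_apply, real_inner_smul_left, smul_eq_mul, mul_comm]

lemma IsMeanNorming.card_mul_lintegral_enorm_inner_rpow_le {c q : ℝ} {x : κ → E}
    (hx : IsMeanNorming c x) (hc : 0 < c) (hq : 1 ≤ q) (w : E) :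
    Fintype.card κ * ∫⁻ v, ‖⟪w, v⟫‖ₑ ^ q ∂unitGaussian E ≤
      ENNReal.ofReal ((4 * √q / c) ^ q) * ∑ i, ‖⟪w, x i⟫‖ₑ ^ q := by
  have hq0 : 0 ≤ q := zero_le_one.trans hq
  have henorm (i : κ) : ‖⟪w, x i⟫‖ₑ ^ q = ENNReal.ofReal (|⟪x i, w⟫| ^ q) := by
    rw [Real.enorm_eq_ofReal_abs, ENNReal.ofReal_rpow_of_nonneg (abs_nonneg _) hq0,
      real_inner_comm]
  simp_rw [henorm]
  rw [← ENNReal.ofReal_sum_of_nonneg fun _ _ ↦ by positivity, ← ENNReal.ofReal_mul (by positivity)]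
  calc
    _ ≤ Fintype.card κ * ENNReal.ofReal ((4 * √q * ‖w‖) ^ q) := by
      gcongr
      exact lintegral_enorm_inner_rpow_unitGaussian_le hq w
    _ = ENNReal.ofReal ((4 * √q / c) ^ q * (Fintype.card κ * (c * ‖w‖) ^ q)) := by
      rw [mul_left_comm, ← Real.mul_rpow (by positivity) (by positivity), ← mul_assoc (_ / c),
        div_mul_cancel₀ _ hc.ne', ENNReal.ofReal_mul (Nat.cast_nonneg _), ENNReal.ofReal_natCast]
    _ ≤ _ := by
      gcongr
      exact hx.card_mul_rpow_le hc.le hq w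

lemma IsMeanNorming.card_mul_lintegral_enorm_map_rpow_le [SFinite μ] [Fact (1 ≤ p)] (hp : p ≠ ⊤)
    {c : ℝ} {x : κ → E} (hx : IsMeanNorming c x) (hc : 0 < c) (f : E →ₗ[ℝ] Lp ℝ p μ) :
    Fintype.card κ * ∫⁻ v, ‖f v‖ₑ ^ p.toReal ∂unitGaussian E ≤
      ENNReal.ofReal ((4 * √p.toReal / c) ^ p.toReal) * ∑ i, ‖f (x i)‖ₑ ^ p.toReal := by
  have hp1 : (1 : ℝ≥0∞) ≤ p := Fact.out
  have hq : 1 ≤ p.toReal := by rwa [← ENNReal.toReal_one, ENNReal.toReal_le_toReal (by simp) hp]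
  obtain ⟨w, hw, hwf⟩ := exists_measurable_inner_ae_eq f
  have hf (v : E) : ‖f v‖ₑ ^ p.toReal = ∫⁻ t, ‖⟪w t, v⟫‖ₑ ^ p.toReal ∂μ := by
    rw [enorm_Lp_rpow_toReal (zero_lt_one.trans_le hp1).ne' hp]
    refine lintegral_congr_ae ?_
    filter_upwards [hwf v] with t ht
    rw [ht]
  simp_rw [hf]
  calc
    _ = ∫⁻ t, Fintype.card κ * ∫⁻ v, ‖⟪w t, v⟫‖ₑ ^ p.toReal ∂unitGaussian E ∂μ := by
      rw [lintegral_lintegral_swap (by fun_prop), lintegral_const_mul' _ _ (by simp)]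
    _ ≤ ∫⁻ t, ENNReal.ofReal ((4 * √p.toReal / c) ^ p.toReal) *
          ∑ i, ‖⟪w t, x i⟫‖ₑ ^ p.toReal ∂μ :=
      lintegral_mono fun t ↦ hx.card_mul_lintegral_enorm_inner_rpow_le hc hq (w t)
    _ = _ := by
      rw [lintegral_const_mul' _ _ ENNReal.ofReal_ne_top,
        lintegral_finsetSum _ fun i _ ↦ by fun_prop]

open Pointwise in
lemma half_le_mul_volume_of_lintegral_enorm_map_rpow_le {F : Type*} [NormedAddCommGroup F]
    [NormedSpace ℝ F] (f : E →ₗ[ℝ] F) {q R : ℝ} (hq : 1 ≤ q) (hR : 0 < R)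
    (hf : ∫⁻ v, ‖f v‖ₑ ^ q ∂unitGaussian E ≤ ENNReal.ofReal (R ^ q)) :
    1 / 2 ≤ ENNReal.ofReal ((2 * R) ^ finrank ℝ E) * volume {v | ‖f v‖ ≤ 1} := by
  have hfc : Continuous f := f.continuous_of_finiteDimensional
  have hq0 : 0 ≤ q := zero_le_one.trans hq
  set A : Set E := {v | ‖f v‖ ≤ 2 * R}
  have hA : MeasurableSet A := (isClosed_le hfc.norm continuous_const).measurableSet
  have hAc : unitGaussian E Aᶜ ≤ 1 / 2 := calc
    _ ≤ unitGaussian E {v | ENNReal.ofReal (2 * R ^ q) ≤ ‖f v‖ₑ ^ q} := by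
      refine measure_mono fun v hv ↦ ?_
      have hv : 2 * R < ‖f v‖ := not_le.1 hv
      rw [mem_ofPred_eq, ← ofReal_norm, ENNReal.ofReal_rpow_of_nonneg (norm_nonneg _) hq0]
      gcongr
      calc
        2 * R ^ q ≤ 2 ^ q * R ^ q := by gcongr; exact Real.self_le_rpow_of_one_le one_le_two hq
        _ = (2 * R) ^ q := (Real.mul_rpow two_pos.le hR.le).symm
        _ ≤ ‖f v‖ ^ q := by gcongr
    _ ≤ ENNReal.ofReal (R ^ q) / ENNReal.ofReal (2 * R ^ q) :=
      (meas_ge_le_lintegral_div (by fun_prop) (by positivity) ENNReal.ofReal_ne_top).trans <| by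
        gcongr
    _ = 1 / 2 := by
      rw [← ENNReal.ofReal_div_of_pos (by positivity), mul_comm, ← div_div,
        div_self (by positivity), ENNReal.ofReal_div_of_pos two_pos]
      simp
  have hscale : A = (2 * R) • {v | ‖f v‖ ≤ 1} := by
    ext v
    rw [mem_smul_set_iff_inv_smul_mem₀ (by positivity), mem_ofPred_eq, mem_ofPred_eq,
      map_smul, norm_smul, norm_inv, Real.norm_of_nonneg (by positivity),
      inv_mul_le_iff₀ (by positivity), mul_one]
  calc
    1 / 2 ≤ unitGaussian E A := by
      rw [← compl_compl A, prob_compl_eq_one_sub hA.compl]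
      refine le_trans ?_ (tsub_le_tsub_left hAc 1)
      rw [ENNReal.sub_half ENNReal.one_ne_top]
    _ ≤ volume A := unitGaussian_le_volume A
    _ = _ := by rw [hscale, Measure.addHaar_smul, abs_of_nonneg (by positivity)]

end LpSubspace

section LpBallImage

variable {n : ℕ} {p : ℝ} {D : Set (EuclideanSpace ℝ (Fin n))}

lemma IsLpBallImage.exists_eq_setOf_norm_map_le_one (hD : IsLpBallImage n p D) :
    ∃ f : EuclideanSpace ℝ (Fin n) →ₗ[ℝ]
        Lp ℝ (ENNReal.ofReal p) (volume.restrict (Icc (0 : ℝ) 1)),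
      D = {v | ‖f v‖ ≤ 1} := by
  obtain ⟨V, -, T, rfl⟩ := hD
  refine ⟨V.subtype ∘ₗ T.symm.toLinearMap, ?_⟩
  ext v
  simp [T.image_eq_preimage_symm]

lemma IsLpBallImage.isCompact (hp : 1 ≤ p) (hD : IsLpBallImage n p D) : IsCompact D := by
  obtain ⟨V, -, T, rfl⟩ := hD
  have : Fact (1 ≤ ENNReal.ofReal p) := ⟨by simpa using hp⟩
  have : FiniteDimensional ℝ V := T.symm.finiteDimensional
  have : ProperSpace V := FiniteDimensional.proper ℝ V
  have h : IsCompact (T '' closedBall (0 : V) 1) :=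
    (isCompact_closedBall 0 1).image T.toContinuousLinearEquiv.continuous
  simpa only [closedBall, dist_zero_right, Submodule.coe_norm] using h

lemma IsMeanNorming.half_le_mul_volume_of_isLpBallImage {κ : Type*} [Fintype κ] [Nonempty κ]
    {x : κ → EuclideanSpace ℝ (Fin n)} {c : ℝ} (hx : IsMeanNorming c x) (hc : 0 < c)
    (hp : 1 ≤ p) (hD : IsLpBallImage n p D) (hxD : ∀ i, x i ∈ D) :
    1 / 2 ≤ (2 * (4 * √p / c)) ^ n * (volume D).toReal := by
  have : Fact (1 ≤ ENNReal.ofReal p) := ⟨by simpa using hp⟩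
  have hp0 : 0 < p := zero_lt_one.trans_le hp
  have hDfin : volume D ≠ ⊤ := (hD.isCompact hp).measure_lt_top.ne
  obtain ⟨f, rfl⟩ := hD.exists_eq_setOf_norm_map_le_one
  have hxf (i : κ) : ‖f (x i)‖ₑ ^ p ≤ 1 := by
    refine ENNReal.rpow_le_one ?_ hp0.le
    rw [← ofReal_norm, ENNReal.ofReal_le_one]
    exact hxD i
  have hmean := hx.card_mul_lintegral_enorm_map_rpow_le ENNReal.ofReal_ne_top hc f
  rw [ENNReal.toReal_ofReal hp0.le] at hmean
  have hint : ∫⁻ v, ‖f v‖ₑ ^ p ∂unitGaussian _ ≤ ENNReal.ofReal ((4 * √p / c) ^ p) := by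
    refine (ENNReal.mul_le_mul_iff_right (a := Fintype.card κ) (by simp) (by simp)).1 ?_
    calc
      _ ≤ ENNReal.ofReal ((4 * √p / c) ^ p) * ∑ i, ‖f (x i)‖ₑ ^ p := hmean
      _ ≤ ENNReal.ofReal ((4 * √p / c) ^ p) * ∑ _i : κ, 1 := by gcongr with i; exact hxf i
      _ = _ := by simp [mul_comm]
  have hhalf := half_le_mul_volume_of_lintegral_enorm_map_rpow_le f hp (by positivity) hint
  rw [finrank_euclideanSpace_fin] at hhalf
  have := ENNReal.toReal_mono (ENNReal.mul_ne_top ENNReal.ofReal_ne_top hDfin) hhalf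
  rwa [ENNReal.toReal_mul, ENNReal.toReal_ofReal (by positivity), ENNReal.toReal_div,
    ENNReal.toReal_one, ENNReal.toReal_ofNat] at this

end LpBallImage

section SignPolytope

lemma exists_forall_exists_isMeanNorming_signVec :
    ∃ K : ℕ, 0 < K ∧ ∀ n : ℕ, 0 < n →
      ∃ X : Fin (K * n) → Fin n → ℤˣ, IsMeanNorming (1 / 100) fun i ↦ signVec (X i) := by
  obtain ⟨K, hK⟩ := exists_pow_lt_of_lt_one (show (0 : ℝ) < 1 / 1000 by norm_num)
    (show (46 / 47 : ℝ) < 1 by norm_num)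
  have hK0 : K ≠ 0 := by
    rintro rfl
    norm_num at hK
  refine ⟨K, hK0.pos, fun n hn ↦ exists_isMeanNorming_signVec ?_⟩
  rw [Fintype.card_fin, Fintype.card_fin]
  calc
    2 * 401 ^ n * (46 / 47 : ℝ) ^ (K * n) = 2 * (401 * (46 / 47) ^ K) ^ n := by
      rw [pow_mul, mul_assoc, mul_pow]
    _ ≤ 2 * (401 * (1 / 1000)) ^ n := by gcongr
    _ ≤ 2 * (401 * (1 / 1000)) := by
      gcongr
      exact pow_le_of_le_one (by norm_num) (by norm_num) hn.ne'
    _ < 1 := by norm_num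

lemma volume_absConvexHull_signVec_le {κ ι : Type*} [Fintype κ] [Fintype ι] [Nonempty ι]
    (X : κ → ι → ℤˣ) {K : ℕ} (hκ : Fintype.card κ = K * Fintype.card ι) :
    volume (absConvexHull ℝ (range fun i ↦ signVec (X i))) ≤
      ENNReal.ofReal ((2 ^ (2 * K + 1) * Real.exp Real.pi / √(Fintype.card ι)) ^
        Fintype.card ι) := by
  have hι : (√(Fintype.card ι) : ℝ) ≠ 0 := by positivity
  calc
    _ ≤ 2 ^ (2 * Fintype.card κ + Fintype.card ι) *
        volume (closedBall (0 : EuclideanSpace ℝ ι) (√(Fintype.card ι) / √(Fintype.card ι))) :=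
      addHaar_absConvexHull_range_le volume (Real.sqrt_nonneg _) (fun i ↦ (norm_signVec _).le)
        Fintype.card_pos
    _ ≤ ENNReal.ofReal (2 ^ (2 * Fintype.card κ + Fintype.card ι)) *
        ENNReal.ofReal ((1 * Real.exp Real.pi / √(Fintype.card ι)) ^ Fintype.card ι) := by
      rw [div_self hι]
      gcongr
      · simp
      · simpa using volume_closedBall_le_pow (E := EuclideanSpace ℝ ι) zero_le_one
    _ = _ := by
      rw [← ENNReal.ofReal_mul (by positivity), hκ, one_mul, ← mul_assoc, ← Nat.succ_mul, pow_mul,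
        ← mul_pow, mul_div_assoc]

end SignPolytope

lemma inv_two_mul_mul_le_div_rpow {A B a b : ℝ} {n : ℕ} (hn : n ≠ 0) (hA : 0 < A) (hB : 0 < B)
    (hb : 0 < b) (ha : 1 / 2 ≤ A ^ n * a) (hbB : b ≤ B ^ n) :
    (2 * A * B)⁻¹ ≤ (a / b) ^ ((1 : ℝ) / n) := by
  have hpow : ((2 * A * B)⁻¹) ^ n ≤ a / b := by
    rw [le_div_iff₀ hb]
    calc
      ((2 * A * B)⁻¹) ^ n * b ≤ ((2 * A * B)⁻¹) ^ n * B ^ n := by gcongr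
      _ = (1 / 2) ^ n / A ^ n := by
        rw [← mul_pow, ← div_pow]
        congr 1
        field_simp
      _ ≤ (1 / 2) / A ^ n := by
        gcongr
        exact pow_le_of_le_one (by norm_num) (by norm_num) hn
      _ ≤ a := by rwa [div_le_iff₀' (by positivity)]
  calc
    (2 * A * B)⁻¹ = (((2 * A * B)⁻¹) ^ n) ^ ((1 : ℝ) / n) := by
      rw [one_div, Real.pow_rpow_inv_natCast (by positivity) hn]
    _ ≤ _ := by gcongr

/-- There is a universal constant `c > 0` such that for every positive
integer `n` there exists an origin-symmetric convex body `L ⊆ ℝⁿ` with nonempty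
interior whose outer volume ratio to the subspaces of `L_p` satisfies
`d_ovr(L, L_pⁿ) ≥ c √n / √p` for all `p ≥ 1`; equivalently, every `D ∈ L_pⁿ`
containing `L` satisfies `(|D|/|L|)^{1/n} ≥ c √n / √p`. -/
theorem outer_volume_ratio_lower_bound :
    ∃ c : ℝ, 0 < c ∧ ∀ n : ℕ, 0 < n →
      ∃ L : Set (EuclideanSpace ℝ (Fin n)),
        IsCompact L ∧ Convex ℝ L ∧ L = -L ∧ (interior L).Nonempty ∧
        ∀ p : ℝ, 1 ≤ p →
          ∀ D : Set (EuclideanSpace ℝ (Fin n)), IsLpBallImage n p D → L ⊆ D →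
            c * Real.sqrt n / Real.sqrt p ≤
              ((volume D).toReal / (volume L).toReal) ^ ((1 : ℝ) / n) := by
  obtain ⟨K, hK, hX⟩ := exists_forall_exists_isMeanNorming_signVec
  set M : ℝ := 2 ^ (2 * K + 1) * Real.exp Real.pi
  refine ⟨1 / (1600 * M), by positivity, fun n hn ↦ ?_⟩
  have : Nonempty (Fin n) := Fin.pos_iff_nonempty.1 hn
  have : Nonempty (Fin (K * n)) := Fin.pos_iff_nonempty.1 (Nat.mul_pos hK hn)
  obtain ⟨X, hX⟩ := hX n hn
  set L := absConvexHull ℝ (range fun i ↦ signVec (X i))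
  have hball : closedBall 0 (1 / 100) ⊆ L := hX.closedBall_subset_absConvexHull
  have hvol : volume L ≤ ENNReal.ofReal ((M / √n) ^ n) := by
    simpa using volume_absConvexHull_signVec_le X (K := K) (by simp)
  have hL : 0 < (volume L).toReal := ENNReal.toReal_pos
    ((measure_closedBall_pos _ _ (by norm_num)).trans_le (measure_mono hball)).ne'
    (hvol.trans_lt ENNReal.ofReal_lt_top).ne
  refine ⟨L, isCompact_absConvexHull_of_finite (finite_range _), convex_absConvexHull,
    balanced_absConvexHull.neg_eq.symm, ⟨0, interior_mono hball ?_⟩, fun p hp D hD hLD ↦ ?_⟩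
  · exact ball_subset_interior_closedBall (mem_ball_self (by norm_num))
  · have hDvol := hX.half_le_mul_volume_of_isLpBallImage (by norm_num) hp hD
      fun i ↦ hLD (subset_absConvexHull (mem_range_self i))
    convert inv_two_mul_mul_le_div_rpow hn.ne' (by positivity) (by positivity) hL hDvol
      (ENNReal.toReal_le_of_le_ofReal (by positivity) hvol) using 1
    field_simp
    norm_num
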